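/- Theorem 2 (feasibility recovery from an infeasible initial point): Let k ∈ {1,2,3} and set ω₁ = 1/4, ω₂ = 1/(2n), ω₃ = 1/(2 + 2√n). Suppose the BMI feasible set F is nonempty, ‖p‖₂ > 0, and x̌ ∈ ℝⁿ satisfies s(x̌) > 0 and d_F(x̌)/s(x̌) < ωₖ/‖p‖₂. Then there exists η₀ > 0 such that for every η ≥ η₀, the penalized convex relaxation (R_{η,Cₖ}) has an optimal solution (x*, X*) which is unique (every optimal solution equals (x*, X*)) and satisfies X* = x* x*ᵀ. -/

import Mathlib

/-!
The argument works directly on the relaxation and needs no Lagrange multipliers. Write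
`H = X - xxᵀ` for the gap of a feasible point `(x, X)`, and `P = ‖p‖₂`. The objective equals
`cᵀx + η (‖x - xc‖² + tr H)`.

* Comparing with a point of `F` that is almost nearest to `xc`, every optimal `x` satisfies
  `‖x - xc‖ ≤ r`, where `r` can be taken arbitrarily close to `d_F(xc)` for large `η`
  (`near_of_le`). The same bound makes sublevel sets compact, so an optimal solution exists.
* If `H ≠ 0`, the point can be strictly improved (`descent_cone`): moving `x` by a small `τ` along
  the unit direction `b` defining `s(xc)` lowers the pencil by at least about `τ (s - 2 P r)`, and
  this slack allows `H` to shrink to `(1 - θ) H`, where `θ κ P tr H` is about `τ (s - 2 P r)`. Here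
  `κ` bounds the pairing of `H` with `M(u)`: `κ = 1` for `C₁` and `κ = √n` for `C₃`
  (`pairBound_C1`, `pairBound_C3`). The penalty then changes by at most about
  `η τ (2 r - (s - 2 P r) / (κ P))`, which is negative exactly when `r / s < 1 / ((2 + 2 κ) P)`.
  So every optimal solution has `H = 0`.
* The midpoint of two optimal solutions is optimal with gap `(x - y)(x - y)ᵀ / 4`, which must
  vanish; this gives uniqueness (`unique_opt_of_descent`).

For `C₂` the constant `1 / (2n)` is at most `1 / (2 + 2√n)` when `n ≥ 3`, where `C₂ ⊆ C₃` is used.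
For `n = 2` it is `1 / 4` and `C₂ ⊆ C₁`. For `n = 1` it is `1 / 2`, larger than the general
argument allows, but there a positive gap tolerates every small move and the descent step holds
for every bound `r` on `‖x - xc‖` (`descent_one`).
-/

open Matrix

noncomputable section

/-- Euclidean (ℓ₂) norm of a finite real vector. -/
def vecNorm {k : ℕ} (u : Fin k → ℝ) : ℝ := Real.sqrt (∑ i, u i ^ 2)

/-- The matrix pencil `p(x, X) = F₀ + ∑ₖ xₖ Kₖ + ∑ᵢ ∑ⱼ Xᵢⱼ Lᵢⱼ`. -/
def pencil {n m : ℕ} (F0 : Matrix (Fin m) (Fin m) ℝ)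
    (K : Fin n → Matrix (Fin m) (Fin m) ℝ)
    (L : Fin n → Fin n → Matrix (Fin m) (Fin m) ℝ)
    (x : Fin n → ℝ) (X : Matrix (Fin n) (Fin n) ℝ) : Matrix (Fin m) (Fin m) ℝ :=
  F0 + ∑ k, x k • K k + ∑ i, ∑ j, X i j • L i j

/-- Negative semidefinite real matrix. -/
def NegSemidef' {k : ℕ} (A : Matrix (Fin k) (Fin k) ℝ) : Prop := (-A).PosSemidef

/-- Negative definite real matrix. -/
def NegDef' {k : ℕ} (A : Matrix (Fin k) (Fin k) ℝ) : Prop := (-A).PosDef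

/-- The BMI feasible set `F = {x : p(x, xxᵀ) ⪯ 0}`. -/
def feasSet {n m : ℕ} (F0 : Matrix (Fin m) (Fin m) ℝ)
    (K : Fin n → Matrix (Fin m) (Fin m) ℝ)
    (L : Fin n → Fin n → Matrix (Fin m) (Fin m) ℝ) : Set (Fin n → ℝ) :=
  {x | NegSemidef' (pencil F0 K L x (vecMulVec x x))}

/-- Feasibility distance `d_F(x) = inf {‖x − a‖₂ : a ∈ F}`. -/
def distF {n m : ℕ} (F0 : Matrix (Fin m) (Fin m) ℝ)
    (K : Fin n → Matrix (Fin m) (Fin m) ℝ)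
    (L : Fin n → Fin n → Matrix (Fin m) (Fin m) ℝ) (x : Fin n → ℝ) : ℝ :=
  sInf {r | ∃ a ∈ feasSet F0 K L, r = vecNorm (x - a)}

/-- `δₖ(x) = 2 ∑ᵢ xᵢ L_{k i}`. -/
def deltaMat {n m : ℕ} (L : Fin n → Fin n → Matrix (Fin m) (Fin m) ℝ)
    (k : Fin n) (x : Fin n → ℝ) : Matrix (Fin m) (Fin m) ℝ :=
  (2 : ℝ) • ∑ i, x i • L k i

/-- The MFCQ condition at a point `x`. -/
def MFCQ {n m : ℕ} (F0 : Matrix (Fin m) (Fin m) ℝ)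
    (K : Fin n → Matrix (Fin m) (Fin m) ℝ)
    (L : Fin n → Fin n → Matrix (Fin m) (Fin m) ℝ) (x : Fin n → ℝ) : Prop :=
  ∃ b : Fin n → ℝ,
    NegDef' (pencil F0 K L x (vecMulVec x x) + ∑ k, b k • (K k + deltaMat L k x))

/-- Smallest eigenvalue of a symmetric real matrix, via the Rayleigh quotient. -/
def lambdaMin {k : ℕ} (A : Matrix (Fin k) (Fin k) ℝ) : ℝ :=
  sInf {r | ∃ u : Fin k → ℝ, vecNorm u = 1 ∧ r = u ⬝ᵥ (A *ᵥ u)}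

/-- The G-MFCQ function `s(x)`. -/
def sFun {n m : ℕ} (K : Fin n → Matrix (Fin m) (Fin m) ℝ)
    (L : Fin n → Fin n → Matrix (Fin m) (Fin m) ℝ) (x : Fin n → ℝ) : ℝ :=
  sSup {r | ∃ b : Fin n → ℝ, vecNorm b = 1 ∧
    r = lambdaMin (-(∑ k, b k • (K k + deltaMat L k x)))}

/-- Spectral norm of a real matrix. -/
def specNorm {k : ℕ} (A : Matrix (Fin k) (Fin k) ℝ) : ℝ :=
  sSup {r | ∃ v : Fin k → ℝ, vecNorm v = 1 ∧ r = vecNorm (A *ᵥ v)}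

/-- Pencil norm `‖p‖₂`. -/
def pencilNorm {n m : ℕ} (L : Fin n → Fin n → Matrix (Fin m) (Fin m) ℝ) : ℝ :=
  sSup {r | ∃ u : Fin m → ℝ, vecNorm u = 1 ∧
    r = specNorm (Matrix.of fun i j => u ⬝ᵥ (L i j *ᵥ u))}

/-- Cone `C₁`: positive semidefinite matrices. -/
def coneC1 (n : ℕ) : Set (Matrix (Fin n) (Fin n) ℝ) := {H | H.PosSemidef}

/-- Cone `C₂`: symmetric matrices with `Hᵢᵢ ≥ 0` and `Hᵢᵢ Hⱼⱼ ≥ Hᵢⱼ²`. -/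
def coneC2 (n : ℕ) : Set (Matrix (Fin n) (Fin n) ℝ) :=
  {H | H.IsSymm ∧ ∀ i j, 0 ≤ H i i ∧ H i j ^ 2 ≤ H i i * H j j}

/-- Cone `C₃`: symmetric matrices with `Hᵢᵢ ≥ 0` and `Hᵢᵢ + Hⱼⱼ ≥ 2|Hᵢⱼ|`. -/
def coneC3 (n : ℕ) : Set (Matrix (Fin n) (Fin n) ℝ) :=
  {H | H.IsSymm ∧ ∀ i j, 0 ≤ H i i ∧ 2 * |H i j| ≤ H i i + H j j}

/-- Dual cone with respect to the trace inner product. -/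
def dualCone {n : ℕ} (C : Set (Matrix (Fin n) (Fin n) ℝ)) :
    Set (Matrix (Fin n) (Fin n) ℝ) :=
  {Y | Y.IsSymm ∧ ∀ H ∈ C, 0 ≤ (Y * H).trace}

/-- `α(Λ)` : the n×n matrix with entries `⟨Lᵢⱼ, Λ⟩ = tr(Lᵢⱼ Λ)`. -/
def alphaMat {n m : ℕ} (L : Fin n → Fin n → Matrix (Fin m) (Fin m) ℝ)
    (Λ : Matrix (Fin m) (Fin m) ℝ) : Matrix (Fin n) (Fin n) ℝ :=
  Matrix.of fun i j => (L i j * Λ).trace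

/-- Objective of the penalized problem `(P_η)`. -/
def penObj {n : ℕ} (c xc : Fin n → ℝ) (η : ℝ) (x : Fin n → ℝ) : ℝ :=
  c ⬝ᵥ x + η * vecNorm (x - xc) ^ 2

/-- `x` is an optimal solution of the penalized problem `(P_η)`. -/
def IsOptPen {n m : ℕ} (F0 : Matrix (Fin m) (Fin m) ℝ)
    (K : Fin n → Matrix (Fin m) (Fin m) ℝ)
    (L : Fin n → Fin n → Matrix (Fin m) (Fin m) ℝ)
    (c xc : Fin n → ℝ) (η : ℝ) (x : Fin n → ℝ) : Prop :=
  x ∈ feasSet F0 K L ∧ ∀ y ∈ feasSet F0 K L, penObj c xc η x ≤ penObj c xc η y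

/-- Objective of the penalized convex relaxation `(R_{η,C})`. -/
def relObj {n : ℕ} (c xc : Fin n → ℝ) (η : ℝ) (x : Fin n → ℝ)
    (X : Matrix (Fin n) (Fin n) ℝ) : ℝ :=
  c ⬝ᵥ x + η * (X.trace - 2 * (xc ⬝ᵥ x) + xc ⬝ᵥ xc)

/-- Feasibility for the relaxation with cone `C`. -/
def RelFeasible {n m : ℕ} (F0 : Matrix (Fin m) (Fin m) ℝ)
    (K : Fin n → Matrix (Fin m) (Fin m) ℝ)
    (L : Fin n → Fin n → Matrix (Fin m) (Fin m) ℝ)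
    (C : Set (Matrix (Fin n) (Fin n) ℝ))
    (x : Fin n → ℝ) (X : Matrix (Fin n) (Fin n) ℝ) : Prop :=
  X.IsSymm ∧ NegSemidef' (pencil F0 K L x X) ∧ X - vecMulVec x x ∈ C

/-- `(x, X)` is an optimal solution of the penalized convex relaxation `(R_{η,C})`. -/
def IsOptRel {n m : ℕ} (F0 : Matrix (Fin m) (Fin m) ℝ)
    (K : Fin n → Matrix (Fin m) (Fin m) ℝ)
    (L : Fin n → Fin n → Matrix (Fin m) (Fin m) ℝ)
    (c xc : Fin n → ℝ) (η : ℝ) (C : Set (Matrix (Fin n) (Fin n) ℝ))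
    (x : Fin n → ℝ) (X : Matrix (Fin n) (Fin n) ℝ) : Prop :=
  RelFeasible F0 K L C x X ∧
    ∀ y Y, RelFeasible F0 K L C y Y → relObj c xc η x X ≤ relObj c xc η y Y

/-- The KKT conditions for `(P_η)` at `(x, Λ)`. -/
def KKT {n m : ℕ} (F0 : Matrix (Fin m) (Fin m) ℝ)
    (K : Fin n → Matrix (Fin m) (Fin m) ℝ)
    (L : Fin n → Fin n → Matrix (Fin m) (Fin m) ℝ)
    (c xc : Fin n → ℝ) (η : ℝ)
    (x : Fin n → ℝ) (Λ : Matrix (Fin m) (Fin m) ℝ) : Prop :=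
  Λ.IsSymm ∧ Λ.PosSemidef ∧
  c + (2 * η) • (x - xc) + (∑ k, ((K k * Λ).trace) • (Pi.single k 1 : Fin n → ℝ))
      + (2 : ℝ) • (alphaMat L Λ *ᵥ x) = 0 ∧
  Λ * pencil F0 K L x (vecMulVec x x) = 0


/-! ### Euclidean norm and quadratic forms -/

lemma vecNorm_nonneg {k : ℕ} (u : Fin k → ℝ) : 0 ≤ vecNorm u := Real.sqrt_nonneg _

lemma vecNorm_sq {k : ℕ} (u : Fin k → ℝ) : vecNorm u ^ 2 = ∑ i, u i ^ 2 :=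
  Real.sq_sqrt (Finset.sum_nonneg fun _ _ => sq_nonneg _)

lemma vecNorm_sq_dot {k : ℕ} (u : Fin k → ℝ) : vecNorm u ^ 2 = u ⬝ᵥ u := by
  rw [vecNorm_sq]; simp [dotProduct, sq]

lemma vecNorm_smul {k : ℕ} (t : ℝ) (u : Fin k → ℝ) : vecNorm (t • u) = |t| * vecNorm u := by
  unfold vecNorm
  rw [← Real.sqrt_sq_eq_abs, ← Real.sqrt_mul (sq_nonneg t), Finset.mul_sum]
  simp [mul_pow]

lemma vecNorm_eq_zero {k : ℕ} {u : Fin k → ℝ} (h : vecNorm u = 0) : u = 0 := by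
  have h1 : ∑ i, u i ^ 2 = 0 := by rw [← vecNorm_sq, h]; norm_num
  rw [Finset.sum_eq_zero_iff_of_nonneg (fun _ _ => sq_nonneg _)] at h1
  ext i
  simpa using h1 i (Finset.mem_univ i)

lemma vecNorm_pos {k : ℕ} {u : Fin k → ℝ} (h : u ≠ 0) : 0 < vecNorm u :=
  lt_of_le_of_ne (vecNorm_nonneg u) fun h0 => h (vecNorm_eq_zero h0.symm)

lemma vecNorm_normalize {k : ℕ} {u : Fin k → ℝ} (h : u ≠ 0) :
    vecNorm ((vecNorm u)⁻¹ • u) = 1 := by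
  have := vecNorm_pos h
  rw [vecNorm_smul, abs_of_pos (inv_pos.2 this), inv_mul_cancel₀ this.ne']

lemma abs_dot_le {k : ℕ} (u v : Fin k → ℝ) : |u ⬝ᵥ v| ≤ vecNorm u * vecNorm v := by
  rw [abs_le]
  constructor
  · have := Real.sum_mul_le_sqrt_mul_sqrt Finset.univ (fun i => - u i) v
    simp only [neg_mul, Finset.sum_neg_distrib, neg_sq] at this
    unfold vecNorm dotProduct
    linarith
  · exact Real.sum_mul_le_sqrt_mul_sqrt Finset.univ u v

lemma abs_apply_le_vecNorm {k : ℕ} (u : Fin k → ℝ) (i : Fin k) : |u i| ≤ vecNorm u := by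
  rw [← Real.sqrt_sq_eq_abs]
  exact Real.sqrt_le_sqrt (Finset.single_le_sum (f := fun i => u i ^ 2)
    (fun _ _ => sq_nonneg _) (Finset.mem_univ i))

/-- The quadratic form `uᵀ A u`. -/
def qf {k : ℕ} (u : Fin k → ℝ) (A : Matrix (Fin k) (Fin k) ℝ) : ℝ := u ⬝ᵥ (A *ᵥ u)

lemma qf_add {k : ℕ} (u : Fin k → ℝ) (A B : Matrix (Fin k) (Fin k) ℝ) :
    qf u (A + B) = qf u A + qf u B := by
  simp [qf, add_mulVec, dotProduct_add]

lemma qf_smul {k : ℕ} (u : Fin k → ℝ) (t : ℝ) (A : Matrix (Fin k) (Fin k) ℝ) :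
    qf u (t • A) = t * qf u A := by
  simp [qf, smul_mulVec, dotProduct_smul]

lemma qf_neg {k : ℕ} (u : Fin k → ℝ) (A : Matrix (Fin k) (Fin k) ℝ) :
    qf u (-A) = - qf u A := by
  simp [qf, neg_mulVec]

lemma qf_sum {k : ℕ} {ι : Type*} (u : Fin k → ℝ) (s : Finset ι)
    (A : ι → Matrix (Fin k) (Fin k) ℝ) :
    qf u (∑ i ∈ s, A i) = ∑ i ∈ s, qf u (A i) := by
  simp [qf, sum_mulVec, dotProduct_sum]

lemma qf_smul_vec {k : ℕ} (t : ℝ) (u : Fin k → ℝ) (A : Matrix (Fin k) (Fin k) ℝ) :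
    qf (t • u) A = t ^ 2 * qf u A := by
  simp [qf, mulVec_smul]; ring

lemma posSemidef_iff_qf {k : ℕ} {A : Matrix (Fin k) (Fin k) ℝ} :
    A.PosSemidef ↔ A.IsSymm ∧ ∀ u, 0 ≤ qf u A := by
  rw [posSemidef_iff_dotProduct_mulVec]
  simp [IsHermitian, IsSymm, qf]

lemma negSemidef_iff_qf {k : ℕ} {A : Matrix (Fin k) (Fin k) ℝ} (hA : A.IsSymm) :
    NegSemidef' A ↔ ∀ u, qf u A ≤ 0 := by
  unfold NegSemidef'
  rw [posSemidef_iff_qf]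
  simp [qf_neg, hA.neg]

/-- By homogeneity, negative semidefiniteness only has to be tested on unit vectors. -/
lemma negSemidef_of_unit {k : ℕ} {A : Matrix (Fin k) (Fin k) ℝ} (hA : A.IsSymm)
    (h : ∀ u, vecNorm u = 1 → qf u A ≤ 0) : NegSemidef' A := by
  rw [negSemidef_iff_qf hA]
  intro u
  by_cases hu : u = 0
  · simp [hu, qf]
  · have h1 := h _ (vecNorm_normalize hu)
    rw [qf_smul_vec] at h1
    have h2 : 0 < ((vecNorm u)⁻¹) ^ 2 := by have := vecNorm_pos hu; positivity
    exact nonpos_of_mul_nonpos_right h1 h2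

/-! ### The pencil along a line and the pencil norm -/

/-- The matrix `M(u)` with entries `uᵀ Lᵢⱼ u`. -/
def momMat {n m : ℕ} (L : Fin n → Fin n → Matrix (Fin m) (Fin m) ℝ) (u : Fin m → ℝ) :
    Matrix (Fin n) (Fin n) ℝ := Matrix.of fun i j => u ⬝ᵥ (L i j *ᵥ u)

/-- The pairing `∑ᵢⱼ Mᵢⱼ Hᵢⱼ` of two matrices. -/
def pair {n : ℕ} (M H : Matrix (Fin n) (Fin n) ℝ) : ℝ := ∑ i, ∑ j, M i j * H i j

lemma pair_add {n : ℕ} (M A B : Matrix (Fin n) (Fin n) ℝ) :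
    pair M (A + B) = pair M A + pair M B := by
  simp [pair, mul_add, Finset.sum_add_distrib]

lemma pair_smul {n : ℕ} (M A : Matrix (Fin n) (Fin n) ℝ) (t : ℝ) :
    pair M (t • A) = t * pair M A := by
  simp only [pair, Finset.mul_sum, Matrix.smul_apply, smul_eq_mul]
  exact Finset.sum_congr rfl fun i _ => Finset.sum_congr rfl fun j _ => by ring

lemma pair_vecMulVec {n : ℕ} (M : Matrix (Fin n) (Fin n) ℝ) (a b : Fin n → ℝ) :
    pair M (vecMulVec a b) = a ⬝ᵥ (M *ᵥ b) := by
  simp only [pair, dotProduct, mulVec, Finset.mul_sum, vecMulVec_apply]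
  exact Finset.sum_congr rfl fun i _ => Finset.sum_congr rfl fun j _ => by ring

lemma momMat_symm {n m : ℕ} {L : Fin n → Fin n → Matrix (Fin m) (Fin m) ℝ}
    (hLsy : ∀ i j, L i j = L j i) (u : Fin m → ℝ) : (momMat L u).IsSymm := by
  ext i j; simp [momMat, hLsy i j]

lemma pencil_symm {n m : ℕ} {F0 : Matrix (Fin m) (Fin m) ℝ}
    {K : Fin n → Matrix (Fin m) (Fin m) ℝ} {L : Fin n → Fin n → Matrix (Fin m) (Fin m) ℝ}
    (hF0 : F0.IsSymm) (hK : ∀ k, (K k).IsSymm) (hL : ∀ i j, (L i j).IsSymm)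
    (x : Fin n → ℝ) (X : Matrix (Fin n) (Fin n) ℝ) : (pencil F0 K L x X).IsSymm := by
  unfold pencil IsSymm
  simp only [transpose_add, transpose_sum, transpose_smul, hF0.eq, (hK _).eq, (hL _ _).eq]

lemma qf_pencil {n m : ℕ} (F0 : Matrix (Fin m) (Fin m) ℝ)
    (K : Fin n → Matrix (Fin m) (Fin m) ℝ) (L : Fin n → Fin n → Matrix (Fin m) (Fin m) ℝ)
    (x : Fin n → ℝ) (X : Matrix (Fin n) (Fin n) ℝ) (u : Fin m → ℝ) :
    qf u (pencil F0 K L x X) = qf u F0 + ∑ k, x k * qf u (K k) + pair (momMat L u) X := by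
  simp only [pencil, qf_add, qf_sum, qf_smul, pair, momMat, of_apply]
  congr 1
  exact Finset.sum_congr rfl fun i _ => Finset.sum_congr rfl fun j _ => mul_comm _ _

lemma qf_grad {n m : ℕ} (K : Fin n → Matrix (Fin m) (Fin m) ℝ)
    (L : Fin n → Fin n → Matrix (Fin m) (Fin m) ℝ) (b z : Fin n → ℝ) (u : Fin m → ℝ) :
    qf u (∑ k, b k • (K k + deltaMat L k z))
      = ∑ k, b k * qf u (K k) + 2 * pair (momMat L u) (vecMulVec b z) := by
  simp only [deltaMat, qf_add, qf_sum, qf_smul, pair, momMat, of_apply, mul_add,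
    Finset.sum_add_distrib, Finset.mul_sum, vecMulVec_apply]
  congr 1
  refine Finset.sum_congr rfl fun i _ => Finset.sum_congr rfl fun j _ => ?_
  simp only [qf]; ring

lemma vecNorm_mulVec_le_sum_rows {k : ℕ} (A : Matrix (Fin k) (Fin k) ℝ) (v : Fin k → ℝ) :
    vecNorm (A *ᵥ v) ≤ (∑ i, vecNorm (A i)) * vecNorm v := by
  have h1 : vecNorm (A *ᵥ v) ≤ ∑ i, |(A *ᵥ v) i| := by
    rw [← abs_of_nonneg (Finset.sum_nonneg fun i _ => abs_nonneg ((A *ᵥ v) i)),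
      ← Real.sqrt_sq_eq_abs]
    apply Real.sqrt_le_sqrt
    have := Finset.sum_sq_le_sq_sum_of_nonneg (s := Finset.univ)
      (f := fun i => |(A *ᵥ v) i|) (fun _ _ => abs_nonneg _)
    simpa using this
  refine h1.trans ?_
  rw [Finset.sum_mul]
  exact Finset.sum_le_sum fun i _ => abs_dot_le _ _

lemma vecNorm_mulVec_le_specNorm {k : ℕ} (A : Matrix (Fin k) (Fin k) ℝ) (v : Fin k → ℝ) :
    vecNorm (A *ᵥ v) ≤ specNorm A * vecNorm v := by
  by_cases hv : v = 0
  · simp [hv, vecNorm]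
  · have hpos := vecNorm_pos hv
    have h : vecNorm (A *ᵥ ((vecNorm v)⁻¹ • v)) ≤ specNorm A := by
      refine le_csSup ⟨∑ i, vecNorm (A i), ?_⟩ ⟨_, vecNorm_normalize hv, rfl⟩
      rintro r ⟨w, hw, rfl⟩
      simpa [hw] using vecNorm_mulVec_le_sum_rows A w
    rw [mulVec_smul, vecNorm_smul, abs_of_pos (inv_pos.2 hpos)] at h
    rwa [inv_mul_le_iff₀ hpos, mul_comm] at h

/-- A positive pencil norm is a genuine supremum, hence an upper bound: the supremum of a set
that is not bounded above would be the junk value `0`. -/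
lemma momMat_mulVec_le {n m : ℕ} {L : Fin n → Fin n → Matrix (Fin m) (Fin m) ℝ}
    (hp : 0 < pencilNorm L) {u : Fin m → ℝ} (hu : vecNorm u = 1) (w : Fin n → ℝ) :
    vecNorm (momMat L u *ᵥ w) ≤ pencilNorm L * vecNorm w := by
  refine (vecNorm_mulVec_le_specNorm _ w).trans ?_
  refine mul_le_mul_of_nonneg_right ?_ (vecNorm_nonneg w)
  have hb : BddAbove {r | ∃ u : Fin m → ℝ, vecNorm u = 1 ∧
      r = specNorm (Matrix.of fun i j => u ⬝ᵥ (L i j *ᵥ u))} := by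
    by_contra h
    exact hp.ne' (Real.sSup_of_not_bddAbove h)
  exact le_csSup hb ⟨u, hu, rfl⟩

lemma abs_bilin_le {n : ℕ} {M : Matrix (Fin n) (Fin n) ℝ} {P : ℝ}
    (hM : ∀ w, vecNorm (M *ᵥ w) ≤ P * vecNorm w) (a b : Fin n → ℝ) :
    |pair M (vecMulVec a b)| ≤ P * (vecNorm a * vecNorm b) := by
  rw [pair_vecMulVec]
  refine (abs_dot_le _ _).trans ?_
  calc vecNorm a * vecNorm (M *ᵥ b) ≤ vecNorm a * (P * vecNorm b) :=
        mul_le_mul_of_nonneg_left (hM b) (vecNorm_nonneg a)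
    _ = _ := by ring

lemma pair_vecMulVec_comm {n : ℕ} {M : Matrix (Fin n) (Fin n) ℝ} (hM : M.IsSymm)
    (a b : Fin n → ℝ) : pair M (vecMulVec a b) = pair M (vecMulVec b a) := by
  rw [pair_vecMulVec, pair_vecMulVec, dotProduct_mulVec, ← mulVec_transpose, hM.eq,
    dotProduct_comm]

/-- A direction along which the linearized constraint at `z` decreases at rate at least `s`,
for any positive `s < s(z)`. -/
lemma exists_direction {n m : ℕ} (hn : 0 < n) {K : Fin n → Matrix (Fin m) (Fin m) ℝ}
    {L : Fin n → Fin n → Matrix (Fin m) (Fin m) ℝ} {z : Fin n → ℝ} {s : ℝ} (hs0 : 0 < s)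
    (hs : s < sFun K L z) :
    ∃ b : Fin n → ℝ, vecNorm b = 1 ∧ ∀ u, vecNorm u = 1 →
      qf u (∑ k, b k • (K k + deltaMat L k z)) ≤ -s := by
  have hne : {r | ∃ b : Fin n → ℝ, vecNorm b = 1 ∧
      r = lambdaMin (-(∑ k, b k • (K k + deltaMat L k z)))}.Nonempty := by
    refine ⟨_, Pi.single ⟨0, hn⟩ 1, ?_, rfl⟩
    simp [vecNorm, Pi.single_apply]
  obtain ⟨_, ⟨b, hb, rfl⟩, hr⟩ := exists_lt_of_lt_csSup hne hs
  refine ⟨b, hb, fun u hu => ?_⟩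
  -- an unbounded set would have the junk infimum `0`, contradicting positivity
  have hbdd : BddBelow {r | ∃ u : Fin m → ℝ, vecNorm u = 1 ∧
      r = u ⬝ᵥ ((-(∑ k, b k • (K k + deltaMat L k z))) *ᵥ u)} := by
    by_contra h
    have : lambdaMin (-(∑ k, b k • (K k + deltaMat L k z))) = 0 :=
      Real.sInf_of_not_bddBelow h
    linarith
  have h1 : lambdaMin (-(∑ k, b k • (K k + deltaMat L k z)))
      ≤ qf u (-(∑ k, b k • (K k + deltaMat L k z))) := csInf_le hbdd ⟨u, hu, rfl⟩
  rw [qf_neg] at h1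
  linarith

/-- Moving `x` by `τ b` and lifting the move linearly around `z` decreases the pencil by at least
`τ s`; this slack absorbs an extra change `D` of the lifted variable. -/
lemma move_feasible {n m : ℕ} {F0 : Matrix (Fin m) (Fin m) ℝ}
    {K : Fin n → Matrix (Fin m) (Fin m) ℝ} {L : Fin n → Fin n → Matrix (Fin m) (Fin m) ℝ}
    (hF0 : F0.IsSymm) (hK : ∀ k, (K k).IsSymm) (hL : ∀ i j, (L i j).IsSymm)
    (hLsy : ∀ i j, L i j = L j i) {x z b : Fin n → ℝ} {X D : Matrix (Fin n) (Fin n) ℝ} {s τ : ℝ}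
    (hx : NegSemidef' (pencil F0 K L x X)) (hτ : 0 ≤ τ)
    (hb : ∀ u, vecNorm u = 1 → qf u (∑ k, b k • (K k + deltaMat L k z)) ≤ -s)
    (hD : ∀ u, vecNorm u = 1 → pair (momMat L u) D ≤ τ * s) :
    NegSemidef' (pencil F0 K L (x + τ • b)
      (X + τ • (vecMulVec b z + vecMulVec z b) + D)) := by
  refine negSemidef_of_unit (pencil_symm hF0 hK hL _ _) fun u hu => ?_
  have h0 := (negSemidef_iff_qf (pencil_symm hF0 hK hL _ _)).1 hx u
  have h1 := mul_le_mul_of_nonneg_left (hb u hu) hτ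
  have h2 := hD u hu
  rw [qf_grad] at h1
  rw [qf_pencil] at h0 ⊢
  rw [pair_add, pair_add, pair_smul, pair_add, pair_vecMulVec_comm (momMat_symm hLsy u) z b]
  have h3 : ∑ k, (x + τ • b) k * qf u (K k)
      = ∑ k, x k * qf u (K k) + τ * ∑ k, b k * qf u (K k) := by
    rw [Finset.mul_sum, ← Finset.sum_add_distrib]
    exact Finset.sum_congr rfl fun k _ => by simp; ring
  rw [h3]
  linarith

/-! ### The three cones -/

/-- The properties of the cone `C` that existence and uniqueness of optimal solutions rest on. -/
structure GoodCone {n : ℕ} (C : Set (Matrix (Fin n) (Fin n) ℝ)) : Prop where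
  closed : IsClosed C
  symm : ∀ H ∈ C, H.IsSymm
  entry : ∀ H ∈ C, ∀ i j, |H i j| ≤ H.trace
  smul : ∀ t : ℝ, 0 ≤ t → ∀ H ∈ C, t • H ∈ C
  rank_one : ∀ v : Fin n → ℝ, vecMulVec v v ∈ C

/-- The trace pairing on `C` with any symmetric matrix of spectral norm at most `P` is bounded by
`κ P tr H`. -/
def PairBound {n : ℕ} (C : Set (Matrix (Fin n) (Fin n) ℝ)) (κ : ℝ) : Prop :=
  ∀ (M : Matrix (Fin n) (Fin n) ℝ) (P : ℝ), M.IsSymm →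
    (∀ w, vecNorm (M *ᵥ w) ≤ P * vecNorm w) → ∀ H ∈ C, |pair M H| ≤ κ * P * H.trace

lemma diag_le_trace {n : ℕ} {H : Matrix (Fin n) (Fin n) ℝ} (h : ∀ i, 0 ≤ H i i) (i : Fin n) :
    H i i ≤ H.trace :=
  Finset.single_le_sum (f := fun i => H i i) (fun j _ => h j) (Finset.mem_univ i)

lemma coneC3_entry {n : ℕ} {H : Matrix (Fin n) (Fin n) ℝ} (h : H ∈ coneC3 n) (i j : Fin n) :
    |H i j| ≤ H.trace := by
  have h1 := diag_le_trace (fun i => (h.2 i i).1) i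
  have h2 := diag_le_trace (fun i => (h.2 i i).1) j
  have h3 := (h.2 i j).2
  linarith

lemma coneC2_subset_coneC3 (n : ℕ) : coneC2 n ⊆ coneC3 n := by
  intro H h
  refine ⟨h.1, fun i j => ⟨(h.2 i j).1, ?_⟩⟩
  have h1 := (h.2 i i).1
  have h2 := (h.2 j j).1
  have h3 := (h.2 i j).2
  have : |H i j| ≤ (H i i + H j j) / 2 := by
    apply abs_le_of_sq_le_sq _ (by linarith)
    nlinarith [sq_nonneg (H i i - H j j)]
  linarith

lemma coneC1_subset_coneC3 (n : ℕ) : coneC1 n ⊆ coneC3 n := by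
  intro H h
  have h' := posSemidef_iff_qf.1 (show H.PosSemidef from h)
  have key : ∀ i j (t : ℝ), 0 ≤ H i i + 2 * t * H i j + t ^ 2 * H j j := by
    intro i j t
    have h1 := h'.2 (Pi.single i 1 + t • Pi.single j 1)
    have h2 : H j i = H i j := h'.1.apply i j
    simp [qf, mulVec_add, mulVec_smul, h2] at h1
    linarith
  refine ⟨h'.1, fun i j => ⟨?_, ?_⟩⟩
  · simpa using key i i 0
  · have h1 := key i j 1
    have h2 := key i j (-1)
    have : |H i j| ≤ (H i i + H j j) / 2 := abs_le.2 ⟨by linarith, by linarith⟩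
    linarith

lemma continuous_entry {n : ℕ} (i j : Fin n) :
    Continuous fun H : Matrix (Fin n) (Fin n) ℝ => H i j :=
  continuous_id.matrix_elem i j

lemma isClosed_isSymm (n : ℕ) : IsClosed {H : Matrix (Fin n) (Fin n) ℝ | H.IsSymm} :=
  isClosed_eq continuous_id.matrix_transpose continuous_id

lemma goodCone_C1 (n : ℕ) : GoodCone (coneC1 n) where
  closed := by
    have : coneC1 n = {H | H.IsSymm} ∩ ⋂ u : Fin n → ℝ, {H | 0 ≤ qf u H} := by
      ext H; simp [coneC1, posSemidef_iff_qf]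
    rw [this]
    refine (isClosed_isSymm n).inter (isClosed_iInter fun u => isClosed_le continuous_const ?_)
    exact continuous_const.dotProduct (continuous_id.matrix_mulVec continuous_const)
  symm H h := (coneC1_subset_coneC3 n h).1
  entry H h := coneC3_entry (coneC1_subset_coneC3 n h)
  smul t ht H h := PosSemidef.smul (show H.PosSemidef from h) ht
  rank_one v := by
    have h := posSemidef_vecMulVec_self_star v
    rwa [star_trivial] at h

lemma goodCone_C2 (n : ℕ) : GoodCone (coneC2 n) where
  closed := by
    have : coneC2 n = {H | H.IsSymm} ∩ ⋂ i, ⋂ j,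
        ({H | 0 ≤ H i i} ∩ {H | H i j ^ 2 ≤ H i i * H j j}) := by
      ext H; simp [coneC2]
    rw [this]
    refine (isClosed_isSymm n).inter (isClosed_iInter fun i => isClosed_iInter fun j =>
      (isClosed_le continuous_const (continuous_entry i i)).inter
      (isClosed_le ((continuous_entry i j).pow 2)
        ((continuous_entry i i).mul (continuous_entry j j))))
  symm H h := h.1
  entry H h := coneC3_entry (coneC2_subset_coneC3 n h)
  smul t ht H h := by
    refine ⟨h.1.smul t, fun i j => ⟨?_, ?_⟩⟩
    · exact mul_nonneg ht (h.2 i j).1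
    · have := mul_le_mul_of_nonneg_left (h.2 i j).2 (sq_nonneg t)
      simp only [Matrix.smul_apply, smul_eq_mul]
      nlinarith
  rank_one v := by
    refine ⟨?_, fun i j => ⟨?_, ?_⟩⟩
    · ext i j; simp [vecMulVec_apply, mul_comm]
    · exact mul_self_nonneg _
    · simp only [vecMulVec_apply]; apply le_of_eq; ring

lemma goodCone_C3 (n : ℕ) : GoodCone (coneC3 n) where
  closed := by
    have : coneC3 n = {H | H.IsSymm} ∩ ⋂ i, ⋂ j,
        ({H | 0 ≤ H i i} ∩ {H | 2 * |H i j| ≤ H i i + H j j}) := by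
      ext H; simp [coneC3]
    rw [this]
    refine (isClosed_isSymm n).inter (isClosed_iInter fun i => isClosed_iInter fun j =>
      (isClosed_le continuous_const (continuous_entry i i)).inter
      (isClosed_le (continuous_const.mul (continuous_entry i j).abs)
        ((continuous_entry i i).add (continuous_entry j j))))
  symm H h := h.1
  entry H h := coneC3_entry h
  smul t ht H h := by
    refine ⟨h.1.smul t, fun i j => ⟨?_, ?_⟩⟩
    · exact mul_nonneg ht (h.2 i j).1
    · have := mul_le_mul_of_nonneg_left (h.2 i j).2 ht
      simp only [Matrix.smul_apply, smul_eq_mul, abs_mul, abs_of_nonneg ht]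
      nlinarith
  rank_one v := coneC2_subset_coneC3 n ((goodCone_C2 n).rank_one v)

lemma pair_sum {n : ℕ} {ι : Type*} (M : Matrix (Fin n) (Fin n) ℝ) (s : Finset ι)
    (A : ι → Matrix (Fin n) (Fin n) ℝ) : pair M (∑ r ∈ s, A r) = ∑ r ∈ s, pair M (A r) := by
  classical
  induction s using Finset.induction_on with
  | empty => simp [pair]
  | insert a s ha ih => rw [Finset.sum_insert ha, Finset.sum_insert ha, pair_add, ih]

open scoped MatrixOrder in
/-- A positive semidefinite matrix is a sum of rank-one matrices `vvᵀ`, on each of which the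
pairing is bounded by `P ‖v‖²`. -/
lemma pairBound_C1 (n : ℕ) : PairBound (coneC1 n) 1 := by
  intro M P _ hM H hH
  obtain ⟨B, rfl⟩ := CStarAlgebra.nonneg_iff_eq_star_mul_self.mp
    (show H.PosSemidef from hH).nonneg
  have h1 : star B * B = ∑ r, vecMulVec (B r) (B r) := by
    ext i j
    simp [mul_apply, Matrix.sum_apply, vecMulVec_apply, star_apply]
  have h2 : (∑ r, vecMulVec (B r) (B r)).trace = ∑ r, vecNorm (B r) * vecNorm (B r) := by
    rw [trace_sum]
    refine Finset.sum_congr rfl fun r _ => ?_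
    rw [trace_vecMulVec, ← vecNorm_sq_dot, sq]
  rw [h1, h2, pair_sum, one_mul, Finset.mul_sum]
  exact (Finset.abs_sum_le_sum_abs _ _).trans
    (Finset.sum_le_sum fun r _ => abs_bilin_le hM _ _)

/-- On `C₃` the pairing is at most `∑ᵢ Hᵢᵢ ∑ⱼ |Mᵢⱼ|`, and the `ℓ₁` norm of a row of `M` is at most
`√n` times its `ℓ₂` norm. -/
lemma pairBound_C3 (n : ℕ) : PairBound (coneC3 n) (Real.sqrt n) := by
  intro M P hMs hM H hH
  have hrow : ∀ i, ∑ j, |M i j| ≤ Real.sqrt n * P := by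
    intro i
    have h1 : vecNorm (M i) ≤ P := by
      have h := hM (Pi.single i 1)
      have h2 : M *ᵥ (Pi.single i 1) = M i := by
        ext j; simp [hMs.apply i j]
      have h3 : vecNorm (Pi.single i 1 : Fin n → ℝ) = 1 := by
        simp [vecNorm, Pi.single_apply]
      rwa [h2, h3, mul_one] at h
    have h2 := Real.sum_mul_le_sqrt_mul_sqrt Finset.univ (fun _ => (1 : ℝ)) (fun j => |M i j|)
    simp only [one_mul, one_pow, Finset.sum_const, Finset.card_univ, Fintype.card_fin,
      nsmul_eq_mul, mul_one, sq_abs] at h2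
    exact h2.trans (mul_le_mul_of_nonneg_left h1 (Real.sqrt_nonneg _))
  have h1 : |pair M H| ≤ ∑ i, ∑ j, |M i j| * ((H i i + H j j) / 2) := by
    refine (Finset.abs_sum_le_sum_abs _ _).trans (Finset.sum_le_sum fun i _ => ?_)
    refine (Finset.abs_sum_le_sum_abs _ _).trans (Finset.sum_le_sum fun j _ => ?_)
    rw [abs_mul]
    refine mul_le_mul_of_nonneg_left ?_ (abs_nonneg _)
    have := (hH.2 i j).2
    linarith
  have h2 : ∑ i, ∑ j, |M i j| * ((H i i + H j j) / 2) = ∑ i, H i i * ∑ j, |M i j| := by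
    have e1 : ∑ i, ∑ j, |M i j| * H j j = ∑ i, ∑ j, |M i j| * H i i := by
      rw [Finset.sum_comm]
      exact Finset.sum_congr rfl fun i _ => Finset.sum_congr rfl fun j _ => by
        rw [hMs.apply i j]
    have e2 : ∑ i, ∑ j, |M i j| * ((H i i + H j j) / 2)
        = (∑ i, ∑ j, |M i j| * H i i + ∑ i, ∑ j, |M i j| * H j j) / 2 := by
      rw [← Finset.sum_add_distrib, Finset.sum_div]
      refine Finset.sum_congr rfl fun i _ => ?_
      rw [← Finset.sum_add_distrib, Finset.sum_div]
      exact Finset.sum_congr rfl fun j _ => by ring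
    rw [e2, e1, add_self_div_two]
    refine Finset.sum_congr rfl fun i _ => ?_
    rw [Finset.mul_sum]
    exact Finset.sum_congr rfl fun j _ => mul_comm _ _
  rw [h2] at h1
  refine h1.trans ?_
  rw [trace, Finset.mul_sum]
  refine Finset.sum_le_sum fun i _ => ?_
  rw [mul_comm]
  exact mul_le_mul_of_nonneg_right (hrow i) (hH.2 i i).1

/-- A symmetric `2 × 2` matrix with nonnegative principal minors is positive semidefinite. -/
lemma coneC2_two_subset : coneC2 2 ⊆ coneC1 2 := by
  intro H h
  refine posSemidef_iff_qf.2 ⟨h.1, fun u => ?_⟩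
  have h0 := (h.2 0 0).1
  have h1 := (h.2 1 1).1
  have h2 := (h.2 0 1).2
  have hs : H 1 0 = H 0 1 := h.1.apply 0 1
  have e : qf u H = H 0 0 * u 0 ^ 2 + 2 * H 0 1 * (u 0 * u 1) + H 1 1 * u 1 ^ 2 := by
    simp [qf, dotProduct, mulVec, Fin.sum_univ_two, hs]; ring
  rw [e]
  rcases h0.eq_or_lt with hzero | hpos
  · have h3 : H 0 1 = 0 := by
      rw [← hzero, zero_mul] at h2
      exact pow_eq_zero_iff (two_ne_zero) |>.1 (le_antisymm h2 (sq_nonneg _))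
    rw [← hzero, h3]
    have := mul_nonneg h1 (sq_nonneg (u 1))
    linarith
  · -- complete the square after multiplying by the positive entry `H 0 0`
    have h4 : 0 ≤ H 0 0 * (H 0 0 * u 0 ^ 2 + 2 * H 0 1 * (u 0 * u 1) + H 1 1 * u 1 ^ 2) := by
      have h5 := mul_nonneg (sub_nonneg.2 h2) (sq_nonneg (u 1))
      nlinarith [sq_nonneg (H 0 0 * u 0 + H 0 1 * u 1)]
    exact nonneg_of_mul_nonneg_right h4 hpos

/-! ### Objective, existence and uniqueness -/

lemma relObj_eq {n : ℕ} (c xc : Fin n → ℝ) (η : ℝ) (x : Fin n → ℝ)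
    (X : Matrix (Fin n) (Fin n) ℝ) :
    relObj c xc η x X
      = c ⬝ᵥ x + η * (vecNorm (x - xc) ^ 2 + (X - vecMulVec x x).trace) := by
  rw [relObj, vecNorm_sq_dot, trace_sub, trace_vecMulVec]
  simp only [sub_dotProduct, dotProduct_sub]
  rw [dotProduct_comm x xc]
  ring

lemma relObj_move {n : ℕ} (c xc b : Fin n → ℝ) (η τ : ℝ) (x : Fin n → ℝ)
    (X D : Matrix (Fin n) (Fin n) ℝ) :
    relObj c xc η (x + τ • b) (X + τ • (vecMulVec b xc + vecMulVec xc b) + D)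
      = relObj c xc η x X + (τ * (c ⬝ᵥ b) + η * D.trace) := by
  simp only [relObj, trace_add, trace_smul, trace_vecMulVec, dotProduct_add, dotProduct_smul,
    smul_eq_mul]
  rw [dotProduct_comm b xc]
  ring

lemma GoodCone.trace_nonneg {n : ℕ} {C : Set (Matrix (Fin n) (Fin n) ℝ)} (hn : 0 < n)
    (hC : GoodCone C) {H : Matrix (Fin n) (Fin n) ℝ} (hH : H ∈ C) : 0 ≤ H.trace :=
  (abs_nonneg _).trans (hC.entry H hH ⟨0, hn⟩ ⟨0, hn⟩)

lemma GoodCone.trace_pos {n : ℕ} {C : Set (Matrix (Fin n) (Fin n) ℝ)}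
    (hC : GoodCone C) {H : Matrix (Fin n) (Fin n) ℝ} (hH : H ∈ C) (h0 : H ≠ 0) :
    0 < H.trace := by
  by_contra h
  refine h0 (Matrix.ext fun i j => ?_)
  exact abs_nonpos_iff.1 ((hC.entry H hH i j).trans (not_lt.1 h))

/-- A point of the relaxation that does at least as well as the lift of a point `a` within `r₁` of
`xc` is within `r` of `xc`, and its relaxation gap is bounded, once `η` is large. -/
lemma near_of_le {n : ℕ} (hn : 0 < n) {C : Set (Matrix (Fin n) (Fin n) ℝ)} (hC : GoodCone C)
    {c xc a x : Fin n → ℝ} {X : Matrix (Fin n) (Fin n) ℝ} {η r₁ r : ℝ} (hη : 0 < η)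
    (hr₁ : 0 ≤ r₁) (hr : r₁ < r) (ha : vecNorm (a - xc) ≤ r₁)
    (hc : vecNorm c ≤ η * (r - r₁)) (hX : X - vecMulVec x x ∈ C)
    (hle : relObj c xc η x X ≤ relObj c xc η a (vecMulVec a a)) :
    vecNorm (x - xc) ≤ r ∧ (X - vecMulVec x x).trace ≤ r ^ 2 := by
  rw [relObj_eq, relObj_eq, sub_self, trace_zero] at hle
  have ht := hC.trace_nonneg hn hX
  generalize (X - vecMulVec x x).trace = t at *
  have h1 : c ⬝ᵥ a - c ⬝ᵥ x = c ⬝ᵥ (a - xc) - c ⬝ᵥ (x - xc) := by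
    simp only [dotProduct_sub]; ring
  have h2 := (abs_le.1 (abs_dot_le c (a - xc))).2
  have h3 := (abs_le.1 (abs_dot_le c (x - xc))).1
  have hv := vecNorm_nonneg (x - xc)
  have hav := vecNorm_nonneg (a - xc)
  have hcn := vecNorm_nonneg c
  generalize vecNorm (x - xc) = v at *
  generalize vecNorm (a - xc) = w at *
  have h4 : c ⬝ᵥ a - c ⬝ᵥ x ≤ η * (r - r₁) * (r₁ + v) := by
    calc c ⬝ᵥ a - c ⬝ᵥ x ≤ vecNorm c * (w + v) := by rw [h1]; linarith
      _ ≤ vecNorm c * (r₁ + v) := by gcongr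
      _ ≤ _ := by gcongr
  have h5 : w ^ 2 ≤ r₁ ^ 2 := by gcongr
  have h6 : v ^ 2 + t ≤ r₁ ^ 2 + (r - r₁) * (r₁ + v) := by
    have : η * (v ^ 2 + t) ≤ η * (r₁ ^ 2 + (r - r₁) * (r₁ + v)) := by
      have := mul_le_mul_of_nonneg_left h5 hη.le
      nlinarith
    exact le_of_mul_le_mul_left this hη
  have h7 : v ≤ r := by
    by_contra h
    push Not at h
    nlinarith
  exact ⟨h7, by nlinarith [sq_nonneg v]⟩

lemma isClosed_relFeasible {n m : ℕ} {F0 : Matrix (Fin m) (Fin m) ℝ}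
    {K : Fin n → Matrix (Fin m) (Fin m) ℝ} {L : Fin n → Fin n → Matrix (Fin m) (Fin m) ℝ}
    (hF0 : F0.IsSymm) (hK : ∀ k, (K k).IsSymm) (hL : ∀ i j, (L i j).IsSymm)
    {C : Set (Matrix (Fin n) (Fin n) ℝ)} (hC : IsClosed C) :
    IsClosed {p : (Fin n → ℝ) × Matrix (Fin n) (Fin n) ℝ | RelFeasible F0 K L C p.1 p.2} := by
  have hent : ∀ i j, Continuous fun p : (Fin n → ℝ) × Matrix (Fin n) (Fin n) ℝ => p.2 i j :=
    fun i j => (continuous_entry i j).comp continuous_snd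
  refine ((isClosed_isSymm n).preimage continuous_snd).inter (IsClosed.inter ?_ ?_)
  · have : {p : (Fin n → ℝ) × Matrix (Fin n) (Fin n) ℝ | NegSemidef' (pencil F0 K L p.1 p.2)}
        = ⋂ u, {p | qf u (pencil F0 K L p.1 p.2) ≤ 0} := by
      ext p
      simp [negSemidef_iff_qf (pencil_symm hF0 hK hL p.1 p.2)]
    change IsClosed {p : (Fin n → ℝ) × Matrix (Fin n) (Fin n) ℝ |
      NegSemidef' (pencil F0 K L p.1 p.2)}
    rw [this]
    refine isClosed_iInter fun u => isClosed_le ?_ continuous_const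
    simp only [qf_pencil, pair]
    fun_prop
  · exact hC.preimage (continuous_snd.sub (continuous_fst.matrix_vecMulVec continuous_fst))

/-- If every non-rank-one feasible point with `x` near `xc` can be strictly improved, then the
relaxation has exactly one optimal solution, and it is rank-one. Existence is by compactness;
uniqueness holds because the midpoint of two distinct rank-one optimal solutions would be an
optimal solution that is not rank-one. -/
lemma unique_opt_of_descent {n m : ℕ} (hn : 0 < n) {F0 : Matrix (Fin m) (Fin m) ℝ}
    {K : Fin n → Matrix (Fin m) (Fin m) ℝ} {L : Fin n → Fin n → Matrix (Fin m) (Fin m) ℝ}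
    (hF0 : F0.IsSymm) (hK : ∀ k, (K k).IsSymm) (hL : ∀ i j, (L i j).IsSymm)
    {C : Set (Matrix (Fin n) (Fin n) ℝ)} (hC : GoodCone C)
    {c xc a : Fin n → ℝ} {η r₁ r : ℝ} (hη : 0 < η)
    (hr₁ : 0 ≤ r₁) (hr : r₁ < r) (ha : vecNorm (a - xc) ≤ r₁) (haF : a ∈ feasSet F0 K L)
    (hc : vecNorm c ≤ η * (r - r₁))
    (hdesc : ∀ x X, RelFeasible F0 K L C x X → vecNorm (x - xc) ≤ r → X ≠ vecMulVec x x →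
      ∃ y Y, RelFeasible F0 K L C y Y ∧ relObj c xc η y Y < relObj c xc η x X) :
    ∃ (xs : Fin n → ℝ) (Xs : Matrix (Fin n) (Fin n) ℝ),
        IsOptRel F0 K L c xc η C xs Xs ∧
        (∀ y Y, IsOptRel F0 K L c xc η C y Y → y = xs ∧ Y = Xs) ∧
        Xs = vecMulVec xs xs := by
  have hzero : (0 : Matrix (Fin n) (Fin n) ℝ) ∈ C := by
    have := hC.rank_one 0
    rwa [vecMulVec_zero] at this
  have haR : RelFeasible F0 K L C a (vecMulVec a a) := by
    refine ⟨?_, haF, by rwa [sub_self]⟩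
    ext i j; simp [vecMulVec_apply, mul_comm]
  -- every optimal solution is rank-one
  have hrank : ∀ y Y, IsOptRel F0 K L c xc η C y Y → Y = vecMulVec y y := by
    intro y Y hY
    by_contra hne
    obtain ⟨z, Z, hZ, hlt⟩ := hdesc y Y hY.1
      (near_of_le hn hC hη hr₁ hr ha hc hY.1.2.2 (hY.2 _ _ haR)).1 hne
    exact absurd (hY.2 z Z hZ) (not_le.2 hlt)
  have hobj : Continuous fun p : (Fin n → ℝ) × Matrix (Fin n) (Fin n) ℝ =>
      relObj c xc η p.1 p.2 := by
    have h1 : Continuous fun p : (Fin n → ℝ) × Matrix (Fin n) (Fin n) ℝ => p.2.trace :=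
      continuous_snd.matrix_trace
    have h2 : ∀ w : Fin n → ℝ, Continuous fun p : (Fin n → ℝ) × Matrix (Fin n) (Fin n) ℝ =>
        w ⬝ᵥ p.1 := fun w => continuous_const.dotProduct continuous_fst
    unfold relObj
    have h3 := h2 c
    have h4 := h2 xc
    fun_prop
  -- the sublevel set at the lift of `a` is a closed subset of a box
  set S : Set ((Fin n → ℝ) × Matrix (Fin n) (Fin n) ℝ) :=
    {p | RelFeasible F0 K L C p.1 p.2} ∩
      {p | relObj c xc η p.1 p.2 ≤ relObj c xc η a (vecMulVec a a)} with hS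
  have hSclosed : IsClosed S :=
    (isClosed_relFeasible hF0 hK hL hC.closed).inter (isClosed_le hobj continuous_const)
  set R := vecNorm xc + r with hR
  have hScompact : IsCompact S := by
    have hbox : IsCompact ((Set.univ.pi fun _ : Fin n => Set.Icc (-R) R) ×ˢ
        (Set.univ.pi fun _ : Fin n => Set.univ.pi fun _ : Fin n =>
          Set.Icc (-(r ^ 2 + R * R)) (r ^ 2 + R * R)) :
        Set ((Fin n → ℝ) × (Fin n → Fin n → ℝ))) :=
      (isCompact_univ_pi fun _ => isCompact_Icc).prod
        (isCompact_univ_pi fun _ => isCompact_univ_pi fun _ => isCompact_Icc)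
    refine IsCompact.of_isClosed_subset hbox hSclosed ?_
    rintro ⟨x, X⟩ ⟨hfe, hle⟩
    obtain ⟨h1, h2⟩ := near_of_le hn hC hη hr₁ hr ha hc hfe.2.2 hle
    have hx : ∀ i, |x i| ≤ R := by
      intro i
      have e1 := abs_apply_le_vecNorm (x - xc) i
      have e2 := abs_apply_le_vecNorm xc i
      have e3 := abs_add_le ((x - xc) i) (xc i)
      have e4 : (x - xc) i + xc i = x i := by simp
      rw [e4] at e3
      linarith
    have hX : ∀ i j, |X i j| ≤ r ^ 2 + R * R := by
      intro i j
      have e1 := hC.entry _ hfe.2.2 i j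
      have e3 := abs_add_le ((X - vecMulVec x x) i j) (x i * x j)
      have e4 : (X - vecMulVec x x) i j + x i * x j = X i j := by simp [vecMulVec_apply]
      rw [e4, abs_mul] at e3
      have e5 : |x i| * |x j| ≤ R * R :=
        mul_le_mul (hx i) (hx j) (abs_nonneg _) ((abs_nonneg _).trans (hx i))
      linarith
    exact ⟨fun i _ => abs_le.1 (hx i), fun i _ j _ => abs_le.1 (hX i j)⟩
  obtain ⟨⟨xs, Xs⟩, hmem, hmin⟩ := hScompact.exists_isMinOn ⟨(a, vecMulVec a a), haR, le_refl (relObj c xc η a (vecMulVec a a))⟩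
    hobj.continuousOn
  have hopt : IsOptRel F0 K L c xc η C xs Xs := by
    refine ⟨hmem.1, fun y Y hY => ?_⟩
    by_cases h : relObj c xc η y Y ≤ relObj c xc η a (vecMulVec a a)
    · exact hmin (show (y, Y) ∈ S from ⟨hY, h⟩)
    · exact (show relObj c xc η xs Xs ≤ _ from hmem.2).trans (not_le.1 h).le
  have hXs := hrank _ _ hopt
  refine ⟨xs, Xs, hopt, fun y Y hY => ?_, hXs⟩
  have hYy := hrank _ _ hY
  have heq : relObj c xc η y Y = relObj c xc η xs Xs :=
    le_antisymm (hY.2 _ _ hopt.1) (hopt.2 _ _ hY.1)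
  -- the gap at the midpoint is a multiple of `(xs - y)(xs - y)ᵀ`
  have hgap : ((1 / 2 : ℝ) • (Xs + Y)) - vecMulVec ((1 / 2 : ℝ) • (xs + y))
      ((1 / 2 : ℝ) • (xs + y)) = (1 / 4 : ℝ) • vecMulVec (xs - y) (xs - y) := by
    rw [hXs, hYy]
    ext i j
    simp [vecMulVec_apply]
    ring
  have hmid : IsOptRel F0 K L c xc η C ((1 / 2 : ℝ) • (xs + y)) ((1 / 2 : ℝ) • (Xs + Y)) := by
    refine ⟨⟨(hopt.1.1.add hY.1.1).smul _, ?_, ?_⟩, ?_⟩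
    · rw [negSemidef_iff_qf (pencil_symm hF0 hK hL _ _)]
      intro u
      have e1 := (negSemidef_iff_qf (pencil_symm hF0 hK hL _ _)).1 hopt.1.2.1 u
      have e2 := (negSemidef_iff_qf (pencil_symm hF0 hK hL _ _)).1 hY.1.2.1 u
      rw [qf_pencil] at e1 e2 ⊢
      have e3 : ∑ k, ((1 / 2 : ℝ) • (xs + y)) k * qf u (K k)
          = (1 / 2) * (∑ k, xs k * qf u (K k) + ∑ k, y k * qf u (K k)) := by
        rw [← Finset.sum_add_distrib, Finset.mul_sum]
        exact Finset.sum_congr rfl fun k _ => by simp; ring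
      rw [e3, pair_smul, pair_add]
      linarith
    · rw [hgap]
      exact hC.smul _ (by norm_num) _ (hC.rank_one _)
    · intro z Z hZ
      have e1 := hopt.2 z Z hZ
      have e2 : relObj c xc η ((1 / 2 : ℝ) • (xs + y)) ((1 / 2 : ℝ) • (Xs + Y))
          = (1 / 2) * (relObj c xc η xs Xs + relObj c xc η y Y) := by
        simp only [relObj, dotProduct_smul, dotProduct_add, trace_smul, trace_add, smul_eq_mul]
        ring
      rw [e2, heq]
      linarith
  have h0 := hrank _ _ hmid
  rw [← sub_eq_zero, hgap] at h0
  have hxy : xs - y = 0 := by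
    ext i
    have := congrFun (congrFun h0 i) i
    simpa [vecMulVec_apply] using this
  have hxy' : y = xs := (sub_eq_zero.1 hxy).symm
  exact ⟨hxy', by rw [hYy, hXs, hxy']⟩

/-! ### Descent away from rank-one points -/

lemma exists_small {A B D : ℝ} (hA : 0 < A) (hB : 0 < B) (hD : 0 < D) :
    ∃ τ > 0, τ ≤ A ∧ τ ≤ B ∧ τ ≤ D :=
  ⟨min A (min B D), by positivity, min_le_left _ _, (min_le_right _ _).trans (min_le_left _ _),
    (min_le_right _ _).trans (min_le_right _ _)⟩

/-- Moving `x` along `b` creates slack in the matrix inequality, which is spent on shrinking the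
gap `H = X - xxᵀ` to `(1 - θ) H`. To first order the objective changes by
`τ (cᵀb + 2 η bᵀ(x - xc)) - η θ tr H`, with `θ tr H` about `τ (s - 2 P r) / (κ P)`. -/
lemma descent_cone {n m : ℕ} {F0 : Matrix (Fin m) (Fin m) ℝ}
    {K : Fin n → Matrix (Fin m) (Fin m) ℝ} {L : Fin n → Fin n → Matrix (Fin m) (Fin m) ℝ}
    (hF0 : F0.IsSymm) (hK : ∀ k, (K k).IsSymm) (hL : ∀ i j, (L i j).IsSymm)
    (hLsy : ∀ i j, L i j = L j i) {C : Set (Matrix (Fin n) (Fin n) ℝ)} (hC : GoodCone C)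
    {κ : ℝ} (hκ : 0 < κ) (hpair : PairBound C κ) (hp : 0 < pencilNorm L)
    {c xc b : Fin n → ℝ} {η r s : ℝ} (hη : 0 < η) (hr : 0 ≤ r) (hb1 : vecNorm b = 1)
    (hb : ∀ u, vecNorm u = 1 → qf u (∑ k, b k • (K k + deltaMat L k xc)) ≤ -s)
    (hlarge : κ * pencilNorm L * vecNorm c
      < η * (s - 2 * (1 + κ) * pencilNorm L * r))
    {x : Fin n → ℝ} {X : Matrix (Fin n) (Fin n) ℝ} (hx : RelFeasible F0 K L C x X)
    (hv : vecNorm (x - xc) ≤ r) (hne : X ≠ vecMulVec x x) :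
    ∃ y Y, RelFeasible F0 K L C y Y ∧ relObj c xc η y Y < relObj c xc η x X := by
  set P := pencilNorm L with hP
  set H := X - vecMulVec x x with hH
  have hHC : H ∈ C := hx.2.2
  have hh : 0 < H.trace := hC.trace_pos hHC (sub_ne_zero.2 hne)
  set h := H.trace with hhdef
  have hcn := vecNorm_nonneg c
  have hε : 0 < s - 2 * (1 + κ) * P * r := by
    have : 0 < η * (s - 2 * (1 + κ) * P * r) := lt_of_le_of_lt (by positivity) hlarge
    exact pos_of_mul_pos_right this hη.le
  have hs' : 0 < s - 2 * P * r := by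
    have : 0 ≤ κ * P * r := by positivity
    nlinarith
  set s' := s - 2 * P * r with hs'def
  set ε := η * (s - 2 * (1 + κ) * P * r) - κ * P * vecNorm c with hεdef
  have hεpos : 0 < ε := by rw [hεdef]; linarith
  obtain ⟨τ, hτ, ht1, ht2, ht3⟩ := exists_small (A := κ * P * h / s')
    (B := ε / (2 * (η * (1 + κ) * P))) (D := s' / P) (by positivity) (by positivity)
    (by positivity)
  rw [le_div_iff₀ hs'] at ht1
  rw [le_div_iff₀ (by positivity)] at ht2
  rw [le_div_iff₀ hp] at ht3
  set θ := τ * (s' - τ * P) / (κ * P * h) with hθdef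
  have hθh : θ * (κ * P * h) = τ * (s' - τ * P) := by
    rw [hθdef]; field_simp
  have hθ0 : 0 ≤ θ := div_nonneg (mul_nonneg hτ.le (by linarith)) (by positivity)
  have hθ1 : θ ≤ 1 := by
    rw [hθdef, div_le_one (by positivity)]
    nlinarith [mul_pos (mul_pos hτ hτ) hp]
  set D : Matrix (Fin n) (Fin n) ℝ := (-θ) • H +
    τ • (vecMulVec b (x - xc) + vecMulVec (x - xc) b) + (τ ^ 2) • vecMulVec b b with hD
  have hgap : (X + τ • (vecMulVec b xc + vecMulVec xc b) + D)
      - vecMulVec (x + τ • b) (x + τ • b) = (1 - θ) • H := by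
    rw [hD, hH]
    ext i j
    simp [vecMulVec_apply]
    ring
  have hmem : (1 - θ) • H ∈ C := hC.smul _ (by linarith) _ hHC
  have hYeq : X + τ • (vecMulVec b xc + vecMulVec xc b) + D
      = (1 - θ) • H + vecMulVec (x + τ • b) (x + τ • b) := by
    rw [← hgap]; abel
  refine ⟨x + τ • b, X + τ • (vecMulVec b xc + vecMulVec xc b) + D, ⟨?_, ?_, ?_⟩, ?_⟩
  · rw [hYeq]
    refine (hC.symm _ hmem).add ?_
    ext i j; simp [vecMulVec_apply, mul_comm]
  · refine move_feasible hF0 hK hL hLsy hx.2.1 hτ.le hb fun u hu => ?_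
    have hM := momMat_mulVec_le hp hu
    have hMs := momMat_symm hLsy u
    have e1 := (abs_le.1 (hpair _ _ hMs hM H hHC)).1
    have e2 := (abs_le.1 (abs_bilin_le hM b (x - xc))).2
    have e3 := (abs_le.1 (abs_bilin_le hM b b)).2
    rw [hb1, one_mul] at e2 e3
    rw [hD, pair_add, pair_add, pair_smul, pair_smul, pair_smul, pair_add,
      pair_vecMulVec_comm hMs (x - xc) b]
    have f1 := mul_le_mul_of_nonneg_left e1 hθ0
    have f2 := mul_le_mul_of_nonneg_left (e2.trans (mul_le_mul_of_nonneg_left hv hp.le)) hτ.le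
    have f3 := mul_le_mul_of_nonneg_left e3 (sq_nonneg τ)
    have f4 : τ * s = τ * (s' - τ * P) + 2 * (τ * (P * r)) + τ ^ 2 * P := by
      rw [hs'def]; ring
    rw [f4, ← hθh]
    linarith
  · rw [hgap]; exact hmem
  · rw [relObj_move]
    have htr : D.trace = -θ * h + 2 * (τ * (b ⬝ᵥ (x - xc))) + τ ^ 2 := by
      rw [hD, trace_add, trace_add, trace_smul, trace_smul, trace_smul, trace_add,
        trace_vecMulVec, trace_vecMulVec, trace_vecMulVec, dotProduct_comm (x - xc) b,
        ← vecNorm_sq_dot b, hb1]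
      simp only [smul_eq_mul]
      ring
    have e1 := (abs_le.1 (abs_dot_le c b)).2
    have e2 := (abs_le.1 (abs_dot_le b (x - xc))).2
    rw [hb1] at e1 e2
    have e3 : D.trace ≤ -θ * h + 2 * (τ * r) + τ ^ 2 := by
      rw [htr]
      have := mul_le_mul_of_nonneg_left (show b ⬝ᵥ (x - xc) ≤ r by linarith) hτ.le
      linarith
    have e4 := mul_le_mul_of_nonneg_left e3 hη.le
    have e5 := mul_le_mul_of_nonneg_left e1 hτ.le
    -- clear the denominator `κ P` of `θ h`
    have key : κ * P * (τ * vecNorm c + η * (-θ * h + 2 * (τ * r) + τ ^ 2)) < 0 := by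
      have f1 : κ * P * (τ * vecNorm c + η * (-θ * h + 2 * (τ * r) + τ ^ 2))
          = τ * (-ε + τ * (η * (1 + κ) * P)) := by
        have : κ * P * (τ * vecNorm c + η * (-θ * h + 2 * (τ * r) + τ ^ 2))
          = κ * P * τ * vecNorm c - η * (θ * (κ * P * h))
            + κ * P * η * (2 * (τ * r) + τ ^ 2) := by ring
        rw [this, hθh, hεdef, hs'def]; ring
      rw [f1]
      exact mul_neg_of_pos_of_neg hτ (by linarith)
    have key2 : τ * vecNorm c + η * (-θ * h + 2 * (τ * r) + τ ^ 2) < 0 :=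
      neg_of_mul_neg_right key (by positivity)
    linarith

/-- For `n = 1` the cone is a half-line, so a positive gap stays positive under small moves and
the whole slack can be spent on the term `D = -(τ s / P) bbᵀ`. -/
lemma descent_one {m : ℕ} {F0 : Matrix (Fin m) (Fin m) ℝ}
    {K : Fin 1 → Matrix (Fin m) (Fin m) ℝ} {L : Fin 1 → Fin 1 → Matrix (Fin m) (Fin m) ℝ}
    (hF0 : F0.IsSymm) (hK : ∀ k, (K k).IsSymm) (hL : ∀ i j, (L i j).IsSymm)
    (hLsy : ∀ i j, L i j = L j i) (hp : 0 < pencilNorm L)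
    {c xc b : Fin 1 → ℝ} {η r s : ℝ} (hr : 0 ≤ r) (hs : 0 < s)
    (hb1 : vecNorm b = 1)
    (hb : ∀ u, vecNorm u = 1 → qf u (∑ k, b k • (K k + deltaMat L k xc)) ≤ -s)
    (hlarge : pencilNorm L * vecNorm c < η * s)
    {x : Fin 1 → ℝ} {X : Matrix (Fin 1) (Fin 1) ℝ} (hx : RelFeasible F0 K L (coneC2 1) x X)
    (hv : vecNorm (x - xc) ≤ r) (hne : X ≠ vecMulVec x x) :
    ∃ y Y, RelFeasible F0 K L (coneC2 1) y Y ∧ relObj c xc η y Y < relObj c xc η x X := by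
  set P := pencilNorm L with hP
  have hh := (goodCone_C2 1).trace_pos hx.2.2 (sub_ne_zero.2 hne)
  set h := (X - vecMulVec x x).trace with hhdef
  have hσ : 0 < s / P := div_pos hs hp
  set σ := s / P with hσdef
  have hσP : σ * P = s := div_mul_cancel₀ _ hp.ne'
  obtain ⟨τ, hτ, ht1, ht2, -⟩ := exists_small (A := h / (2 * r + 1 + σ)) (B := 1) (D := 1)
    (by positivity) one_pos one_pos
  rw [le_div_iff₀ (by positivity)] at ht1
  have hbb : b ⬝ᵥ b = 1 := by rw [← vecNorm_sq_dot, hb1, one_pow]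
  have hbv := (abs_le.1 (abs_dot_le b (x - xc))).2
  rw [hb1, one_mul] at hbv
  have hcb := (abs_le.1 (abs_dot_le c b)).2
  rw [hb1, mul_one] at hcb
  set D : Matrix (Fin 1) (Fin 1) ℝ := (-(τ * σ)) • vecMulVec b b with hD
  set Y := X + τ • (vecMulVec b xc + vecMulVec xc b) + D with hY
  have hsymm : ∀ A : Matrix (Fin 1) (Fin 1) ℝ, A.IsSymm := fun A => by
    ext i j; rw [Subsingleton.elim i j]; rfl
  have hnn : 0 ≤ (Y - vecMulVec (x + τ • b) (x + τ • b)) 0 0 := by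
    have e : (Y - vecMulVec (x + τ • b) (x + τ • b)) 0 0
        = h - 2 * τ * (b ⬝ᵥ (x - xc)) - τ ^ 2 * (b ⬝ᵥ b) - τ * σ * (b ⬝ᵥ b) := by
      simp [hY, hD, hhdef, vecMulVec_apply, dotProduct, trace]
      ring
    rw [e, hbb]
    have f1 := mul_le_mul_of_nonneg_left (hbv.trans hv) hτ.le
    nlinarith
  refine ⟨x + τ • b, Y, ⟨hsymm _, ?_, hsymm _, fun i j => ?_⟩, ?_⟩
  · refine move_feasible hF0 hK hL hLsy hx.2.1 hτ.le hb fun u hu => ?_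
    have e := (abs_le.1 (abs_bilin_le (momMat_mulVec_le hp hu) b b)).1
    rw [hb1, one_mul, mul_one] at e
    have e2 := mul_le_mul_of_nonneg_left e (mul_pos hτ hσ).le
    rw [hD, pair_smul, ← hσP]
    linarith
  · rw [Subsingleton.elim i 0, Subsingleton.elim j 0]
    exact ⟨hnn, (sq _).le⟩
  · rw [hY, relObj_move, hD, trace_smul, trace_vecMulVec, hbb]
    simp only [smul_eq_mul]
    have e1 : vecNorm c < η * σ := by
      rw [hσdef, ← mul_div_assoc, lt_div_iff₀ hp]; linarith
    have e2 := mul_lt_mul_of_pos_left (hcb.trans_lt e1) hτ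
    linarith

/-- A threshold `η₀` exists as soon as descent holds for all `η` with `A ‖c‖ < η g`. -/
lemma exists_threshold {n m : ℕ} (hn : 0 < n) {F0 : Matrix (Fin m) (Fin m) ℝ}
    {K : Fin n → Matrix (Fin m) (Fin m) ℝ} {L : Fin n → Fin n → Matrix (Fin m) (Fin m) ℝ}
    (hF0 : F0.IsSymm) (hK : ∀ k, (K k).IsSymm) (hL : ∀ i j, (L i j).IsSymm)
    {C : Set (Matrix (Fin n) (Fin n) ℝ)} (hC : GoodCone C)
    {c xc a : Fin n → ℝ} {r₁ r : ℝ}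
    (hr₁ : 0 ≤ r₁) (hr : r₁ < r) (ha : vecNorm (a - xc) ≤ r₁) (haF : a ∈ feasSet F0 K L)
    {A g : ℝ} (hA : 0 ≤ A) (hg : 0 < g)
    (hdesc : ∀ η > 0, A * vecNorm c < η * g → ∀ x X, RelFeasible F0 K L C x X →
      vecNorm (x - xc) ≤ r → X ≠ vecMulVec x x →
      ∃ y Y, RelFeasible F0 K L C y Y ∧ relObj c xc η y Y < relObj c xc η x X) :
    ∃ η₀ > (0 : ℝ), ∀ η ≥ η₀,
      ∃ (xs : Fin n → ℝ) (Xs : Matrix (Fin n) (Fin n) ℝ),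
        IsOptRel F0 K L c xc η C xs Xs ∧
        (∀ y Y, IsOptRel F0 K L c xc η C y Y → y = xs ∧ Y = Xs) ∧
        Xs = vecMulVec xs xs := by
  have hcn := vecNorm_nonneg c
  have hrr : 0 < r - r₁ := sub_pos.2 hr
  refine ⟨A * vecNorm c / g + vecNorm c / (r - r₁) + 1, by positivity, fun η hη => ?_⟩
  have h1 : 0 ≤ A * vecNorm c / g := by positivity
  have h2 : 0 ≤ vecNorm c / (r - r₁) := by positivity
  have hη0 : 0 < η := by linarith
  refine unique_opt_of_descent hn hF0 hK hL hC hη0 hr₁ hr ha haF ?_ (hdesc η hη0 ?_)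
  · rw [← div_le_iff₀ hrr]; linarith
  · rw [← div_lt_iff₀ hg]; linarith

theorem bmi_theorem_two {n m : ℕ} (hn : 0 < n) (hm : 0 < m)
    (F0 : Matrix (Fin m) (Fin m) ℝ)
    (K : Fin n → Matrix (Fin m) (Fin m) ℝ)
    (L : Fin n → Fin n → Matrix (Fin m) (Fin m) ℝ)
    (hF0 : F0.IsSymm) (hK : ∀ k, (K k).IsSymm)
    (hL : ∀ i j, (L i j).IsSymm) (hLsy : ∀ i j, L i j = L j i)
    (c xc : Fin n → ℝ) (k : Fin 3)
    (ω : ℝ)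
    (hω : ω = if k = 0 then 1/4 else if k = 1 then 1/(2*(n : ℝ))
          else 1/(2 + 2*Real.sqrt (n : ℝ)))
    (C : Set (Matrix (Fin n) (Fin n) ℝ))
    (hC : C = if k = 0 then coneC1 n else if k = 1 then coneC2 n else coneC3 n)
    (hne : (feasSet F0 K L).Nonempty)
    (hp : 0 < pencilNorm L)
    (hs : 0 < sFun K L xc)
    (hd : distF F0 K L xc / sFun K L xc < ω / pencilNorm L) :
    ∃ η₀ > (0 : ℝ), ∀ η ≥ η₀,
      ∃ (xs : Fin n → ℝ) (Xs : Matrix (Fin n) (Fin n) ℝ),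
        IsOptRel F0 K L c xc η C xs Xs ∧
        (∀ y Y, IsOptRel F0 K L c xc η C y Y → y = xs ∧ Y = Xs) ∧
        Xs = vecMulVec xs xs := by
  have hn' : (1 : ℝ) ≤ n := by exact_mod_cast hn
  have hsq := Real.sqrt_nonneg (n : ℝ)
  have hω0 : 0 < ω := by
    rw [hω]; split_ifs <;> positivity
  set P := pencilNorm L with hP
  set d := distF F0 K L xc with hd'
  have hd0 : 0 ≤ d := by
    apply Real.sInf_nonneg
    rintro _ ⟨a, -, rfl⟩
    exact vecNorm_nonneg _
  have hdP : d * P / ω < sFun K L xc := by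
    rw [div_lt_div_iff₀ hs hp] at hd
    rw [div_lt_iff₀ hω0]; linarith
  obtain ⟨s, hs1, hs2⟩ := exists_between hdP
  have hs0 : 0 < s := lt_of_le_of_lt (by positivity) hs1
  have hds : d < ω * s / P := by
    rw [div_lt_iff₀ hω0] at hs1
    rw [lt_div_iff₀ hp]; linarith
  obtain ⟨r, hdr, hrs⟩ := exists_between hds
  obtain ⟨r₁, hdr₁, hr₁r⟩ := exists_between hdr
  have hr₁0 : 0 ≤ r₁ := hd0.trans hdr₁.le
  have hr0 : 0 ≤ r := hr₁0.trans hr₁r.le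
  obtain ⟨b, hb1, hb⟩ := exists_direction hn hs0 hs2
  obtain ⟨a, haF, ha⟩ : ∃ a ∈ feasSet F0 K L, vecNorm (a - xc) ≤ r₁ := by
    obtain ⟨a₀, ha₀⟩ := hne
    obtain ⟨_, ⟨a, haF, rfl⟩, ha⟩ := exists_lt_of_csInf_lt
      (s := {r | ∃ a ∈ feasSet F0 K L, r = vecNorm (xc - a)}) ⟨_, a₀, ha₀, rfl⟩ hdr₁
    refine ⟨a, haF, ?_⟩
    have e : a - xc = (-1 : ℝ) • (xc - a) := by simp
    rw [e, vecNorm_smul]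
    simpa using ha.le
  rw [lt_div_iff₀ hp] at hrs
  -- `ω ≤ 1 / (2 + 2 κ)` is exactly what descent needs when the cone has pairing constant `κ`
  have general : ∀ κ : ℝ, 0 < κ → GoodCone C → PairBound C κ → ω * (2 * (1 + κ)) ≤ 1 →
      ∃ η₀ > (0 : ℝ), ∀ η ≥ η₀,
      ∃ (xs : Fin n → ℝ) (Xs : Matrix (Fin n) (Fin n) ℝ),
        IsOptRel F0 K L c xc η C xs Xs ∧
        (∀ y Y, IsOptRel F0 K L c xc η C y Y → y = xs ∧ Y = Xs) ∧
        Xs = vecMulVec xs xs := by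
    intro κ hκ hgood hpair hωκ
    refine exists_threshold hn hF0 hK hL hgood hr₁0 hr₁r ha haF (A := κ * P)
      (g := s - 2 * (1 + κ) * P * r) (by positivity) ?_ ?_
    · have e1 : (2 * (1 + κ)) * (r * P) < (2 * (1 + κ)) * (ω * s) :=
        mul_lt_mul_of_pos_left hrs (by positivity)
      have e2 := mul_le_mul_of_nonneg_right hωκ hs0.le
      nlinarith
    · intro η hη hlarge x X hx hv hX
      exact descent_cone hF0 hK hL hLsy hgood hκ hpair hp hη hr0 hb1 hb hlarge hx hv hX
  have hωsqrt : 1 / (2 + 2 * Real.sqrt (n : ℝ)) * (2 * (1 + Real.sqrt (n : ℝ))) ≤ 1 := by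
    rw [div_mul_eq_mul_div, div_le_one (by positivity)]; linarith
  have hsqpos : 0 < Real.sqrt (n : ℝ) := Real.sqrt_pos.2 (by linarith)
  by_cases hk0 : k = 0
  · rw [if_pos hk0] at hω hC
    refine general 1 one_pos (hC ▸ goodCone_C1 n) (hC ▸ pairBound_C1 n) ?_
    rw [hω]; norm_num
  by_cases hk1 : k = 1
  · rw [if_neg hk0, if_pos hk1] at hω hC
    rcases (show n = 1 ∨ n = 2 ∨ 3 ≤ n by omega) with h1 | h2 | h3
    · subst h1
      subst hC
      refine exists_threshold hn hF0 hK hL (goodCone_C2 1) hr₁0 hr₁r ha haF (A := P)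
        (g := s) hp.le hs0 ?_
      intro η _ hlarge x X hx hv hX
      exact descent_one hF0 hK hL hLsy hp hr0 hs0 hb1 hb hlarge hx hv hX
    · subst h2
      refine general 1 one_pos (hC ▸ goodCone_C2 2) ?_ ?_
      · intro M Q hM hMQ H hH
        rw [hC] at hH
        exact pairBound_C1 2 M Q hM hMQ H (coneC2_two_subset hH)
      · rw [hω]; norm_num
    · refine general (Real.sqrt n) hsqpos (hC ▸ goodCone_C2 n) ?_ ?_
      · intro M Q hM hMQ H hH
        rw [hC] at hH
        exact pairBound_C3 n M Q hM hMQ H (coneC2_subset_coneC3 n hH)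
      · -- `1 + √n ≤ n` holds from `n = 3` on
        have h3' : (3 : ℝ) ≤ n := by exact_mod_cast h3
        have e1 : Real.sqrt (n : ℝ) ≤ n - 1 := by
          rw [Real.sqrt_le_left (by linarith)]; nlinarith
        rw [hω, div_mul_eq_mul_div, div_le_one (by positivity)]
        linarith
  · rw [if_neg hk0, if_neg hk1] at hω hC
    refine general (Real.sqrt n) hsqpos (hC ▸ goodCone_C3 n) (hC ▸ pairBound_C3 n) ?_
    rw [hω]; exact hωsqrt
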